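/- Let B_w be a bounded bilateral weighted backward shift on ℓ^p(ℤ), 1 ≤ p < ∞. If there exist x ∈ ℓ^p(ℤ) and nonzero y ∈ ℓ^p(ℤ) such that for every ε > 0 the set {n ≥ 0 : ‖B_w^n x − y‖ < ε} has positive upper Banach density, then ∑_{n≥1} 1/|w₀w₁⋯wₙ|^p < ∞ and ∑_{n<0} |wₙw_{n+1}⋯w₀|^p < ∞ (equivalently, B_w is chaotic). -/

import Mathlib

def PosUpperBanachDensity (A : Set ℕ) : Prop :=
  ∃ δ : ℝ, 0 < δ ∧ ∀ N : ℕ, 0 < N → ∃ m : ℕ, δ * N ≤ (A ∩ Set.Ioc m (m + N)).ncard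

lemma aux_pairs (B D : Finset ℤ) (m : ℤ) (N Q : ℕ) (E : ℝ) (hE : 0 ≤ E)
    (hB : B ⊆ Finset.Ioc m (m + N))
    (hD : ∀ d ∈ D, |d| ≤ Q)
    (hc : ∀ d ∈ D, ∀ e ∈ D, d ≠ e → ((B.filter fun n => n + (d - e) ∈ B).card : ℝ) ≤ E) :
    ((D.card : ℝ) * B.card) ^ 2 ≤ (N + 2 * Q) * (D.card * B.card + D.card * D.card * E) := by
  classical
  set X : Finset ℤ := Finset.Ioc (m - Q) (m + N + Q) with hX
  have hXc : (X.card : ℝ) = N + 2 * Q := by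
    rw [hX, Int.card_Ioc]
    have : (m + N + Q - (m - Q)).toNat = N + 2 * Q := by omega
    rw [this]; push_cast; ring
  have hshift : ∀ d ∈ D, ∑ x ∈ X, (if x + d ∈ B then (1:ℝ) else 0) = B.card := by
    intro d hd
    rw [Finset.sum_boole]
    norm_cast
    apply Finset.card_bij (fun a _ => a + d)
    · intro a ha; simp at ha; exact ha.2
    · intro a _ b _ h; simpa using h
    · intro b hb
      refine ⟨b - d, ?_, by ring⟩
      have h1 := hB hb
      have h2 := abs_le.1 (hD d hd)
      simp only [Finset.mem_Ioc] at h1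
      simp only [Finset.mem_filter, hX, Finset.mem_Ioc, sub_add_cancel]
      refine ⟨⟨by linarith, by linarith⟩, hb⟩
  have hpair : ∀ d ∈ D, ∀ e ∈ D,
      ∑ x ∈ X, (if x + d ∈ B then (1:ℝ) else 0) * (if x + e ∈ B then (1:ℝ) else 0)
      ≤ (if d = e then (B.card : ℝ) else 0) + E := by
    intro d hd e he
    by_cases hde : d = e
    · subst hde
      rw [if_pos rfl, ← hshift d hd]
      have : ∀ x ∈ X, (if x + d ∈ B then (1:ℝ) else 0) * (if x + d ∈ B then (1:ℝ) else 0)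
        = (if x + d ∈ B then (1:ℝ) else 0) := by
        intro x _; split_ifs <;> simp
      rw [Finset.sum_congr rfl this]; linarith
    · rw [if_neg hde, zero_add]
      refine le_trans ?_ (hc d hd e he hde)
      have : ∀ x ∈ X, (if x + d ∈ B then (1:ℝ) else 0) * (if x + e ∈ B then (1:ℝ) else 0)
        = (if x + d ∈ B ∧ x + e ∈ B then (1:ℝ) else 0) := by
        intro x _; split_ifs <;> simp_all
      rw [Finset.sum_congr rfl this, Finset.sum_boole]
      norm_cast
      apply Finset.card_le_card_of_injOn (fun a => a + e)
      · intro a ha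
        simp only [Finset.coe_filter, Set.mem_ofPred_eq] at ha ⊢
        refine ⟨ha.2.2, ?_⟩
        have : a + e + (d - e) = a + d := by ring
        rw [this]; exact ha.2.1
      · intro a _ b _ h; simpa using h
  have hsum : ∑ x ∈ X, ∑ d ∈ D, (if x + d ∈ B then (1:ℝ) else 0) = D.card * B.card := by
    rw [Finset.sum_comm, Finset.sum_congr rfl hshift]; simp
  have hsq : ∑ x ∈ X, (∑ d ∈ D, (if x + d ∈ B then (1:ℝ) else 0)) ^ 2
      ≤ D.card * B.card + D.card * D.card * E := by
    calc _ = ∑ d ∈ D, ∑ e ∈ D, ∑ x ∈ X,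
          (if x + d ∈ B then (1:ℝ) else 0) * (if x + e ∈ B then (1:ℝ) else 0) := by
          simp_rw [sq, Finset.sum_mul_sum]
          rw [Finset.sum_comm]
          refine Finset.sum_congr rfl fun d _ => Finset.sum_comm
      _ ≤ ∑ d ∈ D, ∑ e ∈ D, ((if d = e then (B.card : ℝ) else 0) + E) :=
          Finset.sum_le_sum fun d hd => Finset.sum_le_sum fun e he => hpair d hd e he
      _ = _ := by
          simp [Finset.sum_add_distrib]; ring
  have := sq_sum_le_card_mul_sum_sq (s := X)
    (f := fun x => ∑ d ∈ D, (if x + d ∈ B then (1:ℝ) else 0))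
  rw [hsum, hXc] at this
  exact this.trans (mul_le_mul_of_nonneg_left hsq (by positivity))

set_option maxHeartbeats 2000000 in
lemma aux_comb (A : Set ℕ) (hA : PosUpperBanachDensity A) (v : ℤ → ℝ) (hv : ∀ k, 0 ≤ v k)
    (K : ℝ) (hK : 1 ≤ K) (hvK : ∀ k, v k ≤ K * v (k + 1)) (M : ℝ)
    (hM : ∀ n ∈ A, ∀ F : Finset ℕ, (∀ m ∈ F, m ∈ A) → ∑ m ∈ F, v ((m : ℤ) - n) ≤ M) :
    Summable v := by
  classical
  obtain ⟨δ, hδ, hA⟩ := hA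
  choose! m hm using hA
  set B0 : ℕ → Finset ℕ := fun N => (Finset.Ioc (m N) (m N + N)).filter (· ∈ A) with hB0
  have hB0c : ∀ N, 0 < N → δ * N ≤ (B0 N).card := by
    intro N hN
    have := hm N hN
    have h2 : A ∩ Set.Ioc (m N) (m N + N) = ↑(B0 N) := by
      ext a; simp [hB0]; tauto
    rwa [h2, Set.ncard_coe_finset] at this
  set B : ℕ → Finset ℤ := fun N => (B0 N).map Nat.castEmbedding with hBdef
  have hBc : ∀ N, (B N).card = (B0 N).card := fun N => Finset.card_map _
  have hBle : ∀ N, (B0 N).card ≤ N := by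
    intro N
    refine (Finset.card_filter_le _ _).trans ?_
    simp
  have hBsub : ∀ N, B N ⊆ Finset.Ioc (m N : ℤ) (m N + N) := by
    intro N b hb
    simp only [hBdef, hB0, Finset.mem_map, Finset.mem_filter, Finset.mem_Ioc] at hb
    obtain ⟨a, ⟨ha, _⟩, rfl⟩ := hb
    simp; omega
  set U : Filter ℕ := (Filter.hyperfilter ℕ : Filter ℕ) with hU
  have hUtop : U ≤ Filter.atTop := by
    rw [← Nat.cofinite_eq_atTop]; exact Filter.hyperfilter_le_cofinite
  have hpos : ∀ Q : ℕ, ∀ᶠ N in U, Q < N := fun Q => hUtop (Filter.eventually_gt_atTop Q)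
  set η : ℝ := δ ^ 2 / 4 with hη
  have hη0 : 0 < η := by positivity
  set c : ℕ → ℤ → ℕ := fun N d => ((B N).filter fun n => n + d ∈ B N).card with hc
  set S : Set ℤ := {d | ∀ᶠ N in U, η * N ≤ c N d} with hS
  have hSnot : ∀ d, d ∉ S → ∀ᶠ N in U, (c N d : ℝ) ≤ η * N := by
    intro d hd
    have : ∀ᶠ N in U, ¬ (η * N ≤ c N d) := Ultrafilter.eventually_not.2 hd
    filter_upwards [this] with N hN
    exact (not_le.1 hN).le
  have hcsymm : ∀ N d, c N (-d) = c N d := by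
    intro N d
    apply Finset.card_bij (fun a _ => a - d)
    · intro a ha
      simp only [Finset.mem_filter, sub_add_cancel] at ha ⊢
      exact ⟨by simpa [sub_eq_add_neg] using ha.2, ha.1⟩
    · intro a _ b _ h; simpa using h
    · intro b hb
      simp only [Finset.mem_filter] at hb
      exact ⟨b + d, by simp only [Finset.mem_filter]; simpa using ⟨hb.2, hb.1⟩, by ring⟩
  have hSsymm : ∀ d, d ∈ S → -d ∈ S := by
    intro d hd
    simp only [hS, Set.mem_ofPred_eq, hcsymm] at hd ⊢
    exact hd
  have hδ1 : δ ≤ 1 := by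
    have h1 := hB0c 1 one_pos
    have h2 : ((B0 1).card : ℝ) ≤ (1:ℕ) := by exact_mod_cast hBle 1
    push_cast at h1 h2; linarith
  have hS0 : (0:ℤ) ∈ S := by
    simp only [hS, Set.mem_ofPred_eq]
    filter_upwards [hpos 0] with N hN
    have : c N 0 = (B N).card := by simp [hc]
    rw [this, hBc]
    refine le_trans ?_ (hB0c N hN)
    apply mul_le_mul_of_nonneg_right _ (by positivity)
    rw [hη]; nlinarith
  -- step 1
  have step1 : ∀ F : Finset ℤ, (∀ d ∈ F, d ∈ S) → ∑ d ∈ F, v d ≤ M / η := by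
    intro F hF
    have h1 : ∀ᶠ N in U, ∀ d ∈ F, η * N ≤ c N d := by
      rw [Filter.eventually_all_finset]
      exact hF
    obtain ⟨N, hN, hN0⟩ := (h1.and (hpos 0)).exists
    have hM0 : ∀ n ∈ B N, ∑ d ∈ F, (if n + d ∈ B N then v d else 0) ≤ M := by
      intro n hn
      simp only [hBdef, Finset.mem_map] at hn
      obtain ⟨a, ha, rfl⟩ := hn
      have haA : a ∈ A := (Finset.mem_filter.1 ha).2
      refine le_trans ?_ (hM a haA (B0 N) (fun k hk => (Finset.mem_filter.1 hk).2))
      rw [← Finset.sum_filter]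
      have : ∑ k ∈ B0 N, v ((k:ℤ) - a) = ∑ d ∈ (B0 N).image (fun k : ℕ => (k : ℤ) - a), v d := by
        rw [Finset.sum_image]
        intro x _ y _ h; simpa using h
      rw [this]
      apply Finset.sum_le_sum_of_subset_of_nonneg
      · intro d hd
        simp only [Finset.mem_filter, hBdef, Finset.mem_map] at hd
        obtain ⟨_, k, hk, hkd⟩ := hd
        simp only [Finset.mem_image]
        refine ⟨k, hk, ?_⟩
        simp at hkd; linarith
      · intros; exact hv _
    have h2 : ∑ d ∈ F, (c N d : ℝ) * v d ≤ N * M := by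
      calc ∑ d ∈ F, (c N d : ℝ) * v d
          = ∑ d ∈ F, ∑ n ∈ B N, (if n + d ∈ B N then v d else 0) := by
            refine Finset.sum_congr rfl fun d _ => ?_
            rw [← Finset.sum_filter, Finset.sum_const, nsmul_eq_mul]
        _ = ∑ n ∈ B N, ∑ d ∈ F, (if n + d ∈ B N then v d else 0) := Finset.sum_comm
        _ ≤ ∑ n ∈ B N, M := Finset.sum_le_sum hM0
        _ = (B0 N).card * M := by rw [Finset.sum_const, nsmul_eq_mul, hBc]
        _ ≤ N * M := by
            have hBp : (0:ℝ) < (B0 N).card := lt_of_lt_of_le (by positivity) (hB0c N hN0)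
            have : (B0 N).Nonempty := Finset.card_pos.1 (by exact_mod_cast hBp)
            obtain ⟨a, ha⟩ := this
            have haA : a ∈ A := (Finset.mem_filter.1 ha).2
            have hMn : 0 ≤ M := by simpa using hM a haA ∅ (by simp)
            apply mul_le_mul_of_nonneg_right _ hMn
            exact_mod_cast hBle N
    have h3 : η * N * ∑ d ∈ F, v d ≤ N * M := by
      rw [Finset.mul_sum]
      refine le_trans (Finset.sum_le_sum fun d hd => ?_) h2
      exact mul_le_mul_of_nonneg_right (hN d hd) (hv d)
    have hNr : (0:ℝ) < N := by exact_mod_cast hN0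
    rw [le_div_iff₀ hη0]
    have : (N:ℝ) * ((∑ d ∈ F, v d) * η) ≤ N * M := by linarith
    exact le_of_mul_le_mul_left this hNr
  -- step 2
  have step2 : ∃ T : Finset ℤ, ∀ d, ∃ t ∈ T, d - t ∈ S := by
    by_contra hno
    push Not at hno
    have hbig : ∀ r : ℕ, ∃ D : Finset ℤ, D.card = r ∧ ∀ d ∈ D, ∀ e ∈ D, d ≠ e → d - e ∉ S := by
      intro r
      induction r with
      | zero => exact ⟨∅, by simp⟩
      | succ r ih =>
        obtain ⟨D, hDc, hD⟩ := ih
        obtain ⟨d, hd⟩ := hno D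
        have hdD : d ∉ D := fun h => hd d h (by simpa using hS0)
        refine ⟨insert d D, by rw [Finset.card_insert_of_notMem hdD, hDc], ?_⟩
        intro a ha b hb hab
        rw [Finset.mem_insert] at ha hb
        rcases ha with rfl | ha <;> rcases hb with rfl | hb
        · exact absurd rfl hab
        · exact hd b hb
        · intro h
          have := hSsymm _ h
          rw [neg_sub] at this
          exact hd a ha this
        · exact hD a ha b hb hab
    obtain ⟨r, hr⟩ := exists_nat_gt (4 / δ ^ 2)
    obtain ⟨D, hDc, hD⟩ := hbig r
    obtain ⟨Q, hQ⟩ : ∃ Q : ℕ, ∀ d ∈ D, |d| ≤ Q := by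
      refine ⟨∑ d ∈ D, d.natAbs, fun d hd => ?_⟩
      have := Finset.single_le_sum (f := fun d : ℤ => d.natAbs) (fun _ _ => Nat.zero_le _) hd
      rw [Int.abs_eq_natAbs]
      exact_mod_cast this
    have hev : ∀ᶠ N in U, ∀ d ∈ D, ∀ e ∈ D, d ≠ e → (c N (d - e) : ℝ) ≤ η * N := by
      rw [Filter.eventually_all_finset]
      intro d hd
      rw [Filter.eventually_all_finset]
      intro e he
      by_cases hde : d = e
      · simp [hde]
      · filter_upwards [hSnot _ (hD d hd e he hde)] with N hN _
        exact hN
    obtain ⟨N, hN, hN0⟩ := (hev.and (hpos (2 * Q))).exists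
    have hN0' : 0 < N := by omega
    have key := aux_pairs (B N) D (m N) N Q (η * N) (by positivity) (hBsub N) hQ hN
    rw [hBc, hDc] at key
    have hNr : (0:ℝ) < N := by exact_mod_cast hN0'
    have hQN : (2:ℝ) * Q ≤ N := by exact_mod_cast hN0.le
    have hb1 := hB0c N hN0'
    have hb2 : ((B0 N).card : ℝ) ≤ N := by exact_mod_cast hBle N
    have hr0 : (0:ℝ) < r := lt_trans (by positivity) hr
    set b : ℝ := ((B0 N).card : ℝ)
    have k1 : ((r:ℝ) * (δ * N)) ^ 2 ≤ (r * b) ^ 2 := by gcongr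
    have k2 : ((N:ℝ) + 2 * Q) * (r * b + r * r * (η * N)) ≤ (N + N) * (r * N + r * r * (η * N)) := by
      gcongr
    have k3 : (r * N ^ 2) * (r * δ ^ 2) ≤ (r * (N:ℝ) ^ 2) * (2 + 2 * r * η) := by
      calc _ = ((r:ℝ) * (δ * N)) ^ 2 := by ring
        _ ≤ _ := k1.trans (key.trans k2)
        _ = _ := by ring
    have k4 := le_of_mul_le_mul_left k3 (by positivity)
    rw [div_lt_iff₀ (by positivity)] at hr
    rw [hη] at k4
    linarith
  obtain ⟨T, hT⟩ := step2
  obtain ⟨L, hL⟩ : ∃ Q : ℕ, ∀ d ∈ T, |d| ≤ Q := by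
    refine ⟨∑ d ∈ T, d.natAbs, fun d hd => ?_⟩
    have := Finset.single_le_sum (f := fun d : ℤ => d.natAbs) (fun _ _ => Nat.zero_le _) hd
    rw [Int.abs_eq_natAbs]
    exact_mod_cast this
  have hiter : ∀ (l : ℕ) (k : ℤ), v k ≤ K ^ l * v (k + l) := by
    intro l
    induction l with
    | zero => intro k; simp
    | succ l ih =>
      intro k
      refine (ih k).trans ?_
      rw [pow_succ, mul_assoc]
      apply mul_le_mul_of_nonneg_left _ (by positivity)
      have := hvK (k + l)
      push_cast
      rwa [← add_assoc]
  have hsumS : Summable (S.indicator v) := by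
    apply summable_of_sum_le (c := M / η)
    · intro k; exact Set.indicator_nonneg (fun _ _ => hv _) k
    · intro F
      have := step1 (F.filter (· ∈ S)) (fun d hd => (Finset.mem_filter.1 hd).2)
      rw [Finset.sum_filter] at this
      simpa [Set.indicator_apply] using this
  have hsumT : Summable (fun k : ℤ => K ^ (2 * L) * ∑ t ∈ T, S.indicator v (k + (L - t))) := by
    apply Summable.mul_left
    apply summable_sum
    intro t _
    exact (Equiv.addRight ((L:ℤ) - t)).summable_iff.2 hsumS
  refine Summable.of_nonneg_of_le hv (fun k => ?_) hsumT
  obtain ⟨t, ht, hts⟩ := hT (k + L)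
  have htL := abs_le.1 (hL t ht)
  obtain ⟨l, hl⟩ := Int.eq_ofNat_of_zero_le (show 0 ≤ (L:ℤ) - t by linarith)
  have hl2 : l ≤ 2 * L := by omega
  have hmem : k + (L - t) ∈ S := by
    have : k + ((L:ℤ) - t) = k + L - t := by ring
    rw [this]; exact hts
  calc v k ≤ K ^ l * v (k + l) := hiter l k
    _ ≤ K ^ (2 * L) * v (k + l) :=
        mul_le_mul_of_nonneg_right (pow_le_pow_right₀ hK hl2) (hv _)
    _ = K ^ (2 * L) * S.indicator v (k + (L - t)) := by
        rw [Set.indicator_of_mem hmem, hl]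
    _ ≤ _ := by
        apply mul_le_mul_of_nonneg_left _ (by positivity)
        exact Finset.single_le_sum (f := fun t => S.indicator v (k + (L - t)))
          (fun t _ => Set.indicator_nonneg (fun _ _ => hv _) _) ht

lemma aux_rpow_add (p : ℝ) (hp : 1 ≤ p) (a b : ℝ) (ha : 0 ≤ a) (hb : 0 ≤ b) :
    (a + b) ^ p ≤ 2 ^ p * (a ^ p + b ^ p) := by
  have hp0 : 0 ≤ p := by linarith
  have h1 : (a + b) ^ p ≤ (2 * max a b) ^ p := by
    apply Real.rpow_le_rpow (by positivity) _ hp0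
    linarith [le_max_left a b, le_max_right a b]
  rw [Real.mul_rpow (by norm_num) (by positivity)] at h1
  refine h1.trans (mul_le_mul_of_nonneg_left ?_ (by positivity))
  have := Real.rpow_nonneg ha p
  have := Real.rpow_nonneg hb p
  rcases max_choice a b with h | h <;> rw [h] <;> linarith

theorem stmt14 (p : ℝ) (hp : 1 ≤ p) (w : ℤ → ℝ) (hw0 : ∀ k, w k ≠ 0)
    (C : ℝ) (hbd : ∀ k, |w k| ≤ C)
    (Bw : (ℤ → ℝ) → (ℤ → ℝ)) (hBw : Bw = fun z k => w (k + 1) * z (k + 1))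
    (x y : ℤ → ℝ)
    (hx : Summable fun k => |x k| ^ p) (hy : Summable fun k => |y k| ^ p)
    (hy0 : y ≠ 0)
    (hbd' : ∀ ε : ℝ, 0 < ε →
      PosUpperBanachDensity {n : ℕ | ∑' k : ℤ, |Bw^[n] x k - y k| ^ p < ε ^ p}) :
    Summable (fun n : ℕ => 1 / |∏ ν ∈ Finset.Icc (0 : ℤ) ((n : ℤ) + 1), w ν| ^ p) ∧
    Summable (fun n : ℕ => |∏ ν ∈ Finset.Icc (-(n : ℤ) - 1) 0, w ν| ^ p) := by
  have hp0 : 0 < p := by linarith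
  obtain ⟨j, hj⟩ := Function.ne_iff.1 hy0
  have hj : 0 < |y j| := abs_pos.2 hj
  set ε : ℝ := |y j| / 2 with hε
  have hε0 : 0 < ε := by positivity
  have hA := hbd' ε hε0
  set A := {n : ℕ | ∑' k : ℤ, |Bw^[n] x k - y k| ^ p < ε ^ p} with hAdef
  -- weights
  set W : ℤ → ℝ := fun k => (∏ ν ∈ Finset.Icc 1 k, w ν) * (∏ ν ∈ Finset.Icc (k + 1) 0, w ν)⁻¹
    with hW
  have hW0 : ∀ k, W k ≠ 0 := fun k =>
    mul_ne_zero (Finset.prod_ne_zero_iff.2 fun _ _ => hw0 _)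
      (inv_ne_zero (Finset.prod_ne_zero_iff.2 fun _ _ => hw0 _))
  have hWs : ∀ k, W (k + 1) = w (k + 1) * W k := by
    intro k
    simp only [hW]
    rcases le_or_gt 0 k with hk | hk
    · rw [Finset.Icc_eq_empty (a := k + 1 + 1) (by omega), Finset.Icc_eq_empty (a := k + 1) (by omega)]
      rw [← Finset.insert_Icc_right_eq_Icc_add_one (by omega), Finset.prod_insert (by simp)]
      simp
    · rw [Finset.Icc_eq_empty (b := k + 1) (by omega), Finset.Icc_eq_empty (b := k) (by omega)]
      rw [← Finset.insert_Icc_add_one_left_eq_Icc (a := k + 1) (by omega), Finset.prod_insert (by simp)]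
      have := hw0 (k + 1)
      rw [mul_inv, mul_left_comm (w (k + 1)), mul_inv_cancel_left₀ this]
  have hBn : ∀ (n : ℕ) (k : ℤ), W k * Bw^[n] x k = W (k + n) * x (k + n) := by
    intro n
    induction n with
    | zero => intro k; simp
    | succ n ih =>
      intro k
      rw [Function.iterate_succ_apply', hBw]
      simp only
      rw [← hBw, ← mul_assoc, mul_comm (W k), ← hWs, ih]
      push_cast
      ring_nf
  have hC0 : 0 ≤ C := (abs_nonneg _).trans (hbd 0)
  have hsB : ∀ n : ℕ, Summable fun k => |Bw^[n] x k| ^ p := by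
    intro n
    induction n with
    | zero => simpa using hx
    | succ n ih =>
      have h1 : Summable fun k : ℤ => C ^ p * |Bw^[n] x (k + 1)| ^ p :=
        ((Equiv.addRight (1:ℤ)).summable_iff.2 ih).mul_left _
      refine Summable.of_nonneg_of_le (fun k => by positivity) (fun k => ?_) h1
      rw [Function.iterate_succ_apply', ← Real.mul_rpow hC0 (abs_nonneg _)]
      apply Real.rpow_le_rpow (abs_nonneg _) _ hp0.le
      have : Bw (Bw^[n] x) k = w (k + 1) * Bw^[n] x (k + 1) := by
        conv_lhs => rw [hBw]
        rw [hBw]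
      rw [this, abs_mul]
      exact mul_le_mul_of_nonneg_right (hbd _) (abs_nonneg _)
  have hsD : ∀ n : ℕ, Summable fun k => |Bw^[n] x k - y k| ^ p := by
    intro n
    refine Summable.of_nonneg_of_le (fun k => by positivity) (fun k => ?_)
      (((hsB n).add hy).mul_left (2 ^ p))
    refine le_trans ?_ (aux_rpow_add p hp _ _ (abs_nonneg _) (abs_nonneg _))
    exact Real.rpow_le_rpow (abs_nonneg _) (abs_sub _ _) hp0.le
  set Y := ∑' k, |y k| ^ p with hY
  set M := 2 ^ p * (ε ^ p + Y) with hM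
  have hMb : ∀ n ∈ A, ∀ F : Finset ℤ, ∑ k ∈ F, |Bw^[n] x k| ^ p ≤ M := by
    intro n hn F
    calc ∑ k ∈ F, |Bw^[n] x k| ^ p
        ≤ ∑ k ∈ F, 2 ^ p * (|Bw^[n] x k - y k| ^ p + |y k| ^ p) := by
          refine Finset.sum_le_sum fun k _ => ?_
          refine le_trans ?_ (aux_rpow_add p hp _ _ (abs_nonneg _) (abs_nonneg _))
          apply Real.rpow_le_rpow (abs_nonneg _) _ hp0.le
          simpa using abs_add_le (Bw^[n] x k - y k) (y k)
      _ = 2 ^ p * (∑ k ∈ F, |Bw^[n] x k - y k| ^ p + ∑ k ∈ F, |y k| ^ p) := by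
          rw [← Finset.mul_sum, Finset.sum_add_distrib]
      _ ≤ M := by
          apply mul_le_mul_of_nonneg_left _ (by positivity)
          apply add_le_add
          · exact ((hsD n).sum_le_tsum F (fun _ _ => by positivity)).trans (le_of_lt hn)
          · exact hy.sum_le_tsum F (fun _ _ => by positivity)
  have hlow : ∀ n ∈ A, ε ≤ |Bw^[n] x j| := by
    intro n hn
    have h1 : |Bw^[n] x j - y j| ^ p < ε ^ p :=
      lt_of_le_of_lt ((hsD n).le_tsum j (fun _ _ => by positivity)) hn
    have h2 : |Bw^[n] x j - y j| < ε := (Real.rpow_lt_rpow_iff (abs_nonneg _) hε0.le hp0).1 h1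
    have h3 : |y j| ≤ |Bw^[n] x j| + |Bw^[n] x j - y j| := by
      have := abs_sub (Bw^[n] x j) (Bw^[n] x j - y j)
      simpa using this
    linarith
  set v : ℤ → ℝ := fun k => 1 / |W k| ^ p with hv
  have hWp : ∀ k, 0 < |W k| ^ p := fun k => Real.rpow_pos_of_pos (abs_pos.2 (hW0 k)) p
  have hsv : Summable (fun k => v (k + j)) := by
    refine aux_comb A hA (fun k => v (k + j)) (fun k => (one_div_pos.2 (hWp _)).le)
      (max 1 (C ^ p)) (le_max_left _ _) ?_ (M / (ε ^ p * |W j| ^ p)) ?_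
    rotate_left
    · intro n hn F hF
      have hεp : 0 < ε ^ p := Real.rpow_pos_of_pos hε0 p
      rw [le_div_iff₀ (mul_pos hεp (hWp j)), Finset.sum_mul]
      have h1 := hMb n hn (F.image fun m : ℕ => (m : ℤ) - n + j)
      rw [Finset.sum_image (by intro a _ b _ h; simpa using h)] at h1
      refine le_trans (Finset.sum_le_sum fun m hm => ?_) h1
      simp only [hv]
      rw [one_div, ← Real.mul_rpow hε0.le (abs_nonneg _), ← Real.inv_rpow (abs_nonneg _),
        ← Real.mul_rpow (by positivity) (by positivity)]
      apply Real.rpow_le_rpow (by positivity) _ hp0.le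
      have e1 := hBn n ((m:ℤ) - n + j)
      have e2 := hBn m j
      have e3 : (m:ℤ) - n + j + n = j + m := by ring
      rw [e3, ← e2] at e1
      have e4 : |W (m - n + j)| * |Bw^[n] x (m - n + j)| = |W j| * |Bw^[m] x j| := by
        rw [← abs_mul, ← abs_mul, e1]
      rw [inv_mul_le_iff₀ (abs_pos.2 (hW0 _)), e4, mul_comm ε]
      exact mul_le_mul_of_nonneg_left (hlow m (hF m hm)) (abs_nonneg _)
    · intro k
      have e : k + 1 + j = k + j + 1 := by ring
      simp only [hv]
      rw [e, hWs, abs_mul (w _) (W _), Real.mul_rpow (abs_nonneg (w _)) (abs_nonneg (W _))]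
      have hwp : 0 < |w (k + j + 1)| ^ p := Real.rpow_pos_of_pos (abs_pos.2 (hw0 _)) p
      have h1 : |w (k + j + 1)| ^ p ≤ max 1 (C ^ p) :=
        (Real.rpow_le_rpow (abs_nonneg _) (hbd _) hp0.le).trans (le_max_right _ _)
      have h2 := hWp (k + j)
      rw [mul_one_div, div_le_div_iff₀ h2 (mul_pos hwp h2), one_mul]
      exact mul_le_mul_of_nonneg_right h1 h2.le
  have hsv' : Summable v := (Equiv.addRight j).summable_iff.1 hsv
  constructor
  · have h1 : Summable fun n : ℕ => (1 / |w 0| ^ p) * v ((n:ℤ) + 1) := by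
      apply Summable.mul_left
      exact hsv'.comp_injective (i := fun n : ℕ => (n:ℤ) + 1) (fun a b h => by simpa using h)
    refine h1.congr fun n => ?_
    have e : ∏ ν ∈ Finset.Icc (0 : ℤ) ((n : ℤ) + 1), w ν = w 0 * W (n + 1) := by
      simp only [hW]
      rw [← Finset.insert_Icc_add_one_left_eq_Icc (a := 0) (by omega), Finset.prod_insert (by simp),
        Finset.Icc_eq_empty (a := (n:ℤ) + 1 + 1) (by omega)]
      simp
    rw [e, abs_mul, Real.mul_rpow (abs_nonneg _) (abs_nonneg _)]
    simp only [hv]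
    rw [one_div_mul_one_div]
  · have h1 : Summable fun n : ℕ => v (-(n:ℤ) - 2) :=
      hsv'.comp_injective (i := fun n : ℕ => -(n:ℤ) - 2) (fun a b h => by simpa using h)
    refine h1.congr fun n => ?_
    have e : W (-(n:ℤ) - 2) = (∏ ν ∈ Finset.Icc (-(n : ℤ) - 1) 0, w ν)⁻¹ := by
      simp only [hW]
      rw [Finset.Icc_eq_empty (a := 1) (by omega)]
      have : -(n:ℤ) - 2 + 1 = -n - 1 := by ring
      rw [this]; simp
    simp only [hv]
    rw [e, abs_inv, Real.inv_rpow (abs_nonneg _), one_div, inv_inv]
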